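/- arXiv:1403.0057 — 3 statements merged into one kernel-verified Lean document; each statement's English description precedes it below -/
import Mathlib

section
/- Let p and p' be influence probability functions on a finite vertex type V with p u v ≤ p' u v for all u, v. Then for every seed set S ⊆ V, σ(S, p) ≤ σ(S, p'). (Monotonicity of influence spread in the influence probabilities; Lemma 2.1 of the paper.) -/
open scoped Classical

/-- Weight of a live-edge set `L` under influence probability function `p`:
the product over all ordered pairs `(u,v)` with `u ≠ v` of `p u v` if the
edge is live and `1 - p u v` otherwise. -/
noncomputable def edgeWeight {V : Type*} [Fintype V] [DecidableEq V]
    (p : V → V → ℝ) (L : Finset (V × V)) : ℝ :=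
  ∏ e ∈ (Finset.univ : Finset V).offDiag, (if e ∈ L then p e.1 e.2 else 1 - p e.1 e.2)

/-- The set of vertices reachable from some vertex of `S` via edges of the
live-edge set `L` (reflexive–transitive closure). -/
noncomputable def reachSet {V : Type*} [Fintype V] [DecidableEq V]
    (S : Finset V) (L : Finset (V × V)) : Finset V :=
  Finset.univ.filter (fun x => ∃ s ∈ S, Relation.ReflTransGen (fun a b => (a, b) ∈ L) s x)

/-- Influence spread `σ(S, p)`: the sum over all live-edge sets `L`
(subsets of the off-diagonal pairs) of `w(p,L) * |R(S,L)|`. -/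
noncomputable def infSpread {V : Type*} [Fintype V] [DecidableEq V]
    (S : Finset V) (p : V → V → ℝ) : ℝ :=
  ∑ L ∈ ((Finset.univ : Finset V).offDiag).powerset, edgeWeight p L * (reachSet S L).card

/-- Marginal influence `MI(v | S, p) = σ(S ∪ {v}, p) − σ(S, p)`. -/
noncomputable def marginInf {V : Type*} [Fintype V] [DecidableEq V]
    (v : V) (S : Finset V) (p : V → V → ℝ) : ℝ :=
  infSpread (insert v S) p - infSpread S p

/-!
Under `p` each edge is live independently of the others, so `infSpread S p` is the expectation of
the function `L ↦ (reachSet S L).card` at a random set of edges, and this function is monotone.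
Conditioning on an edge `a` of probability `r` replaces a function `f` by
`fun L => (1 - r) • f L + r • f (insert a L)`, which is monotone if `f` is and, as
`f L ≤ f (insert a L)`, can only grow with `r`. Induction on the number of edges then gives
monotonicity of the expectation in all the probabilities.
-/

section ConvexCombination

variable {α R M : Type*} [Ring R] [PartialOrder R]
  [AddCommGroup M] [PartialOrder M] [IsOrderedAddMonoid M] [Module R M]

theorem one_sub_smul_add_smul_le_of_le [SMulPosMono R M] {r r' : R} {x y : M}
    (hr : r ≤ r') (hxy : x ≤ y) : (1 - r) • x + r • y ≤ (1 - r') • x + r' • y :=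
  calc (1 - r) • x + r • y = x + r • (y - x) := by rw [sub_smul, one_smul, smul_sub]; abel
    _ ≤ x + r' • (y - x) := by gcongr
    _ = (1 - r') • x + r' • y := by rw [sub_smul, one_smul, smul_sub]; abel

theorem monotone_one_sub_smul_add_smul_insert [DecidableEq α] [IsOrderedAddMonoid R]
    [PosSMulMono R M] {f : Finset α → M} (hf : Monotone f) {r : R} (h₀ : 0 ≤ r) (h₁ : r ≤ 1)
    (a : α) :
    Monotone fun L => (1 - r) • f L + r • f (insert a L) := fun _ _ hLL' =>
  add_le_add (smul_le_smul_of_nonneg_left (hf hLL') (sub_nonneg.2 h₁))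
    (smul_le_smul_of_nonneg_left (hf (Finset.insert_subset_insert a hLL')) h₀)

end ConvexCombination

section Bernoulli

variable {α R M : Type*} [DecidableEq α] {q q' : α → R} {E L : Finset α} {a : α}

section Algebra

variable [CommRing R]

/-- The probability of drawing exactly `L` when each `e ∈ E` is drawn independently with
probability `q e`. This is meant for `L ⊆ E`: elements of `L` outside `E` are ignored. -/
def bernoulliWeight (q : α → R) (E L : Finset α) : R :=
  ∏ e ∈ E, if e ∈ L then q e else 1 - q e

/-- The expectation of `f` at the random subset of `E` that contains each `e ∈ E` independently
with probability `q e`. -/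
def bernoulliExpect [AddCommMonoid M] [Module R M] (q : α → R) (E : Finset α)
    (f : Finset α → M) : M :=
  ∑ L ∈ E.powerset, bernoulliWeight q E L • f L

theorem bernoulliWeight_insert_of_notMem (q : α → R) (haE : a ∉ E) (haL : a ∉ L) :
    bernoulliWeight q (insert a E) L = (1 - q a) * bernoulliWeight q E L := by
  rw [bernoulliWeight, Finset.prod_insert haE, if_neg haL, bernoulliWeight]

theorem bernoulliWeight_insert_insert (q : α → R) (haE : a ∉ E) (L : Finset α) :
    bernoulliWeight q (insert a E) (insert a L) = q a * bernoulliWeight q E L := by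
  rw [bernoulliWeight, Finset.prod_insert haE, if_pos (Finset.mem_insert_self a L)]
  congr 1
  refine Finset.prod_congr rfl fun e he => ?_
  have hea : e ≠ a := ne_of_mem_of_not_mem he haE
  simp only [Finset.mem_insert, hea, false_or]

theorem bernoulliExpect_insert [AddCommMonoid M] [Module R M] (q : α → R) (haE : a ∉ E)
    (f : Finset α → M) :
    bernoulliExpect q (insert a E) f =
      bernoulliExpect q E fun L => (1 - q a) • f L + q a • f (insert a L) := by
  rw [bernoulliExpect, Finset.sum_powerset_insert haE, ← Finset.sum_add_distrib]
  refine Finset.sum_congr rfl fun L hL => ?_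
  have haL : a ∉ L := Finset.notMem_mono (Finset.mem_powerset.1 hL) haE
  rw [bernoulliWeight_insert_of_notMem q haE haL, bernoulliWeight_insert_insert q haE L,
    smul_add, smul_smul, smul_smul, mul_comm (1 - q a), mul_comm (q a)]

end Algebra

section Order

variable [CommRing R] [PartialOrder R] [IsOrderedRing R]

theorem bernoulliWeight_nonneg (h₀ : ∀ e ∈ E, 0 ≤ q e) (h₁ : ∀ e ∈ E, q e ≤ 1) (L : Finset α) :
    0 ≤ bernoulliWeight q E L := by
  refine Finset.prod_nonneg fun e he => ?_
  split_ifs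
  · exact h₀ e he
  · exact sub_nonneg.2 (h₁ e he)

theorem bernoulliExpect_le_bernoulliExpect_of_le [AddCommMonoid M] [PartialOrder M]
    [IsOrderedAddMonoid M] [Module R M] [PosSMulMono R M] {f g : Finset α → M}
    (h₀ : ∀ e ∈ E, 0 ≤ q e) (h₁ : ∀ e ∈ E, q e ≤ 1) (hfg : ∀ L ⊆ E, f L ≤ g L) :
    bernoulliExpect q E f ≤ bernoulliExpect q E g :=
  Finset.sum_le_sum fun L hL =>
    smul_le_smul_of_nonneg_left (hfg L (Finset.mem_powerset.1 hL)) (bernoulliWeight_nonneg h₀ h₁ L)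

theorem bernoulliExpect_mono_prob [AddCommGroup M] [PartialOrder M] [IsOrderedAddMonoid M]
    [Module R M] [IsOrderedModule R M] (h₀ : ∀ e ∈ E, 0 ≤ q e) (hle : ∀ e ∈ E, q e ≤ q' e)
    (h₁ : ∀ e ∈ E, q' e ≤ 1) {f : Finset α → M} (hf : Monotone f) :
    bernoulliExpect q E f ≤ bernoulliExpect q' E f := by
  induction E using Finset.induction_on generalizing f with
  | empty => rfl
  | insert a E haE ih =>
    rw [Finset.forall_mem_insert] at h₀ hle h₁
    obtain ⟨h₀a, h₀E⟩ := h₀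
    obtain ⟨hlea, hleE⟩ := hle
    obtain ⟨h₁a, h₁E⟩ := h₁
    have hf_cond := monotone_one_sub_smul_add_smul_insert hf h₀a (hlea.trans h₁a) a
    calc bernoulliExpect q (insert a E) f
        = bernoulliExpect q E fun L => (1 - q a) • f L + q a • f (insert a L) :=
          bernoulliExpect_insert q haE f
      _ ≤ bernoulliExpect q' E fun L => (1 - q a) • f L + q a • f (insert a L) :=
          ih h₀E hleE h₁E hf_cond
      _ ≤ bernoulliExpect q' E fun L => (1 - q' a) • f L + q' a • f (insert a L) :=
          bernoulliExpect_le_bernoulliExpect_of_le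
            (fun e he => (h₀E e he).trans (hleE e he)) h₁E
            fun L _ => one_sub_smul_add_smul_le_of_le hlea (hf (Finset.subset_insert a L))
      _ = bernoulliExpect q' (insert a E) f := (bernoulliExpect_insert q' haE f).symm

end Order

end Bernoulli

section Influence

variable {V : Type*} [Fintype V] [DecidableEq V]

theorem monotone_reachSet (S : Finset V) : Monotone (reachSet S) := by
  intro L L' hLL' x hx
  simp only [reachSet, Finset.mem_filter_univ] at hx ⊢
  obtain ⟨s, hs, hsx⟩ := hx
  exact ⟨s, hs, Relation.ReflTransGen.mono (fun _ _ hab => hLL' hab) _ _ hsx⟩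

theorem infSpread_eq_bernoulliExpect (S : Finset V) (p : V → V → ℝ) :
    infSpread S p =
      bernoulliExpect (Function.uncurry p) Finset.univ.offDiag
        fun L => ((reachSet S L).card : ℝ) :=
  rfl

end Influence

/-- Lemma 2.1: influence spread is monotone in the influence probabilities. -/
theorem infSpread_mono_in_prob {V : Type*} [Fintype V] [DecidableEq V]
    (p p' : V → V → ℝ)
    (hp1 : ∀ u v, 0 ≤ p u v ∧ p u v ≤ 1) (hp2 : ∀ v, p v v = 0)
    (hp1' : ∀ u v, 0 ≤ p' u v ∧ p' u v ≤ 1) (hp2' : ∀ v, p' v v = 0)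
    (hle : ∀ u v, p u v ≤ p' u v) :
    ∀ S : Finset V, infSpread S p ≤ infSpread S p' := by
  intro S
  have hcard : Monotone fun L => ((reachSet S L).card : ℝ) := fun _ _ hLL' =>
    Nat.cast_le.2 (Finset.card_le_card (monotone_reachSet S hLL'))
  rw [infSpread_eq_bernoulliExpect, infSpread_eq_bernoulliExpect]
  exact bernoulliExpect_mono_prob (fun e _ => (hp1 e.1 e.2).1) (fun e _ => hle e.1 e.2)
    (fun e _ => (hp1' e.1 e.2).2) hcard
end

section
/- Let p be an influence probability function on a finite vertex type V. Then σ(S, p) is submodular in the seed set: for all S ⊆ T ⊆ V and every v ∈ V, σ(S ∪ {v}, p) − σ(S, p) ≥ σ(T ∪ {v}, p) − σ(T, p). -/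
open scoped Classical

/-!
For a fixed live-edge set, adding `v` to a seed set gains exactly the vertices reachable from `v`
but not yet reached. A larger seed set leaves fewer of these, and the influence spread averages
these gains with nonnegative weights.
-/

section

variable {V : Type*} [Fintype V] [DecidableEq V]

theorem mem_reachSet {S : Finset V} {L : Finset (V × V)} {x : V} :
    x ∈ reachSet S L ↔ ∃ s ∈ S, Relation.ReflTransGen (fun a b => (a, b) ∈ L) s x :=
  Finset.mem_filter_univ x

theorem reachSet_union (S T : Finset V) (L : Finset (V × V)) :
    reachSet (S ∪ T) L = reachSet S L ∪ reachSet T L := by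
  ext x
  simp only [mem_reachSet, Finset.mem_union, or_and_right, exists_or]

theorem reachSet_subset_reachSet {S T : Finset V} (hST : S ⊆ T) (L : Finset (V × V)) :
    reachSet S L ⊆ reachSet T L := by
  rw [← Finset.union_eq_right, ← reachSet_union, Finset.union_eq_right.mpr hST]

theorem card_reachSet_insert (v : V) (S : Finset V) (L : Finset (V × V)) :
    (reachSet (insert v S) L).card =
      (reachSet {v} L \ reachSet S L).card + (reachSet S L).card := by
  rw [Finset.insert_eq, reachSet_union, Finset.card_sdiff_add_card]

theorem edgeWeight_nonneg {p : V → V → ℝ} (hp : ∀ u v, u ≠ v → 0 ≤ p u v ∧ p u v ≤ 1)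
    (L : Finset (V × V)) : 0 ≤ edgeWeight p L := by
  refine Finset.prod_nonneg fun e he => ?_
  obtain ⟨h_nonneg, h_le_one⟩ := hp e.1 e.2 (Finset.mem_offDiag.mp he).2.2
  split_ifs
  · exact h_nonneg
  · exact sub_nonneg.mpr h_le_one

theorem marginInf_eq_sum (v : V) (S : Finset V) (p : V → V → ℝ) :
    marginInf v S p = ∑ L ∈ (Finset.univ : Finset V).offDiag.powerset,
      edgeWeight p L * (reachSet {v} L \ reachSet S L).card := by
  simp only [marginInf, infSpread, ← Finset.sum_sub_distrib, ← mul_sub, card_reachSet_insert,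
    Nat.cast_add, add_sub_cancel_right]

end

/-- Influence spread is submodular in the seed set. -/
theorem infSpread_submodular {V : Type*} [Fintype V] [DecidableEq V]
    (p : V → V → ℝ)
    (hp1 : ∀ u v, 0 ≤ p u v ∧ p u v ≤ 1) (hp2 : ∀ v, p v v = 0) :
    ∀ S T : Finset V, S ⊆ T → ∀ v : V,
      infSpread (insert v T) p - infSpread T p ≤
        infSpread (insert v S) p - infSpread S p := by
  intro S T hST v
  change marginInf v T p ≤ marginInf v S p
  rw [marginInf_eq_sum, marginInf_eq_sum]
  gcongr with L
  · exact edgeWeight_nonneg (fun u w _ => hp1 u w) L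
  · exact reachSet_subset_reachSet hST L
end

section
/- (Theorem 3.1, approximation guarantee of the Best Topic Selection algorithm.) Let p_1, …, p_d be influence probability functions on a finite vertex type V, let λ_1, …, λ_d ∈ [0,1] with Σ_i λ_i = 1, let D⁺ = {i : λ_i > 0}, and let p = Σ_i λ_i p_i (pointwise), which is an influence probability function. Fix k ∈ ℕ and constants c > 0, μ > 0. Suppose that for each i ∈ D⁺ we are given reals 0 ≤ λ̲_i ≤ λ_i ≤ λ̄_i ≤ 1 and sets T_i, S̄_i ⊆ V such that: (i) (greedy guarantee at the round-up landmark) for every U ⊆ V with |U| ≤ k, (1 − e⁻¹)·σ(U, λ̄_i p_i) ≤ σ(S̄_i, λ̄_i p_i); (ii) (landmark-gap bound) σ(S̄_i, λ̄_i p_i) ≤ μ·σ(T_i, λ̲_i p_i); (iii) (c-sub-additivity) for every U ⊆ V with |U| ≤ k, σ(U, p) ≤ c·Σ_{i ∈ D⁺} σ(U, λ_i p_i). Let i' ∈ D⁺ satisfy σ(T_{i'}, λ̲_{i'} p_{i'}) = max_{i ∈ D⁺} σ(T_i, λ̲_i p_i). Then for every S ⊆ V with |S| ≤ k, (1 − e⁻¹)·σ(S,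 p) ≤ c·|D⁺|·μ·σ(T_{i'}, λ_{i'} p_{i'}). -/
open scoped Classical

/-!
The spread `σ(S, p)` is the mean of the monotone function `L ↦ |R(S, L)|` of a random set `L`
containing each edge independently, so it is monotone in `p`: reveal the edges one at a time, and
note that raising the probability of an edge shifts weight from `f L` to `f (L ∪ {e}) ≥ f L`.
Hence for each topic the spread is bounded by its value at the round-up landmark, which the greedy
and landmark-gap bounds compare with the best round-down spread, itself at most the spread of
`T i'` under topic `i'`. Sub-additivity adds these bounds up over the topics.
-/

section RandomSubset

variable {α R : Type*} [DecidableEq α] [CommRing R]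

/-- The probability that the random subset of `E` containing each `e ∈ E` independently with
probability `q e` equals `L`. -/
def randomSubsetWeight (E : Finset α) (q : α → R) (L : Finset α) : R :=
  ∏ e ∈ E, if e ∈ L then q e else 1 - q e

/-- The mean of `f` at the random subset of `E` containing each `e ∈ E` independently with
probability `q e`. -/
def randomSubsetMean (E : Finset α) (q : α → R) (f : Finset α → R) : R :=
  ∑ L ∈ E.powerset, randomSubsetWeight E q L * f L

theorem randomSubsetWeight_insert_of_notMem {E L : Finset α} {a : α} (q : α → R) (ha : a ∉ E)
    (haL : a ∉ L) :
    randomSubsetWeight (insert a E) q L = (1 - q a) * randomSubsetWeight E q L := by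
  rw [randomSubsetWeight, Finset.prod_insert ha, if_neg haL, randomSubsetWeight]

theorem randomSubsetWeight_insert_insert {E : Finset α} {a : α} (q : α → R) (ha : a ∉ E)
    (L : Finset α) :
    randomSubsetWeight (insert a E) q (insert a L) = q a * randomSubsetWeight E q L := by
  rw [randomSubsetWeight, Finset.prod_insert ha, if_pos (Finset.mem_insert_self a L),
    randomSubsetWeight]
  congr 1
  refine Finset.prod_congr rfl fun e he => ?_
  simp only [Finset.mem_insert, ne_of_mem_of_not_mem he ha, false_or]

theorem randomSubsetMean_insert {E : Finset α} {a : α} (q : α → R) (f : Finset α → R)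
    (ha : a ∉ E) :
    randomSubsetMean (insert a E) q f =
      randomSubsetMean E q (fun L => (1 - q a) * f L + q a * f (insert a L)) := by
  rw [randomSubsetMean, Finset.sum_powerset_insert ha, ← Finset.sum_add_distrib, randomSubsetMean]
  refine Finset.sum_congr rfl fun L hL => ?_
  have haL : a ∉ L := fun h => ha (Finset.mem_powerset.1 hL h)
  rw [randomSubsetWeight_insert_of_notMem q ha haL, randomSubsetWeight_insert_insert q ha]
  ring

variable [PartialOrder R] [IsOrderedRing R]

theorem randomSubsetWeight_nonneg (E : Finset α) {q : α → R} (hq : q ∈ Set.Icc 0 1)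
    (L : Finset α) : 0 ≤ randomSubsetWeight E q L := by
  refine Finset.prod_nonneg fun e _ => ?_
  split_ifs
  exacts [hq.1 e, sub_nonneg.2 (hq.2 e)]

theorem monotone_randomSubsetMean (E : Finset α) {q : α → R} (hq : q ∈ Set.Icc 0 1) :
    Monotone (randomSubsetMean E q) := fun _ _ hfg =>
  Finset.sum_le_sum fun L _ =>
    mul_le_mul_of_nonneg_left (hfg L) (randomSubsetWeight_nonneg E hq L)

theorem monotoneOn_randomSubsetMean (E : Finset α) {f : Finset α → R} (hf : Monotone f) :
    MonotoneOn (fun q => randomSubsetMean E q f) (Set.Icc 0 1) := by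
  intro q hq q' hq' hqq'
  induction E using Finset.induction_on generalizing f with
  | empty => simp [randomSubsetMean, randomSubsetWeight]
  | insert a E ha ih =>
    have mix_monotone : Monotone fun L => (1 - q a) * f L + q a * f (insert a L) := fun L L' hL =>
      add_le_add (mul_le_mul_of_nonneg_left (hf hL) (sub_nonneg.2 (hq.2 a)))
        (mul_le_mul_of_nonneg_left (hf (Finset.insert_subset_insert a hL)) (hq.1 a))
    have mix_le : (fun L => (1 - q a) * f L + q a * f (insert a L)) ≤
        fun L => (1 - q' a) * f L + q' a * f (insert a L) := fun L => by
      have shift : 0 ≤ (q' a - q a) * (f (insert a L) - f L) :=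
        mul_nonneg (sub_nonneg.2 (hqq' a)) (sub_nonneg.2 (hf (Finset.subset_insert a L)))
      linear_combination shift
    simp only [randomSubsetMean_insert _ _ ha]
    exact (ih mix_monotone).trans (monotone_randomSubsetMean E hq' mix_le)

end RandomSubset

section InfluenceSpread

variable {V : Type*} [Fintype V] [DecidableEq V]

theorem infSpread_eq_randomSubsetMean (S : Finset V) (p : V → V → ℝ) :
    infSpread S p = randomSubsetMean (Finset.univ : Finset V).offDiag (Function.uncurry p)
      (fun L => ((reachSet S L).card : ℝ)) :=
  rfl

theorem monotoneOn_infSpread (S : Finset V) : MonotoneOn (infSpread S) (Set.Icc 0 1) := by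
  intro p hp p' hp' hpp'
  have card_monotone : Monotone fun L => ((reachSet S L).card : ℝ) := fun L L' hL =>
    Nat.cast_le.2 (Finset.card_le_card (monotone_reachSet S hL))
  simp only [infSpread_eq_randomSubsetMean]
  exact monotoneOn_randomSubsetMean _ card_monotone
    ⟨fun e => hp.1 e.1 e.2, fun e => hp.2 e.1 e.2⟩
    ⟨fun e => hp'.1 e.1 e.2, fun e => hp'.2 e.1 e.2⟩ fun e => hpp' e.1 e.2

theorem BTS_approximation_general {ι : Type*} (D : Finset ι) (p : V → V → ℝ)
    (qLo q qHi : ι → V → V → ℝ) (hLo : ∀ i ∈ D, 0 ≤ qLo i) (hLo_le : ∀ i ∈ D, qLo i ≤ q i)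
    (hle_Hi : ∀ i ∈ D, q i ≤ qHi i) (hHi : ∀ i ∈ D, qHi i ≤ 1)
    {α c μ : ℝ} (hα : 0 ≤ α) (hc : 0 ≤ c) (hμ : 0 ≤ μ) (S : Finset V) (T Sbar : ι → Finset V)
    (hgreedy : ∀ i ∈ D, α * infSpread S (qHi i) ≤ infSpread (Sbar i) (qHi i))
    (hgap : ∀ i ∈ D, infSpread (Sbar i) (qHi i) ≤ μ * infSpread (T i) (qLo i))
    (hsub : infSpread S p ≤ c * ∑ i ∈ D, infSpread S (q i))
    {i' : ι} (hi' : i' ∈ D)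
    (hmax : ∀ i ∈ D, infSpread (T i) (qLo i) ≤ infSpread (T i') (qLo i')) :
    α * infSpread S p ≤ c * D.card * μ * infSpread (T i') (q i') := by
  have q_nonneg : ∀ i ∈ D, 0 ≤ q i := fun i hi => (hLo i hi).trans (hLo_le i hi)
  have q_le_one : ∀ i ∈ D, q i ≤ 1 := fun i hi => (hle_Hi i hi).trans (hHi i hi)
  have round_up : ∀ i ∈ D, infSpread S (q i) ≤ infSpread S (qHi i) := fun i hi =>
    monotoneOn_infSpread S ⟨q_nonneg i hi, q_le_one i hi⟩
      ⟨(q_nonneg i hi).trans (hle_Hi i hi), hHi i hi⟩ (hle_Hi i hi)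
  have round_down : infSpread (T i') (qLo i') ≤ infSpread (T i') (q i') :=
    monotoneOn_infSpread (T i') ⟨hLo i' hi', (hLo_le i' hi').trans (q_le_one i' hi')⟩
      ⟨q_nonneg i' hi', q_le_one i' hi'⟩ (hLo_le i' hi')
  have topic_bound : ∀ i ∈ D, α * infSpread S (q i) ≤ μ * infSpread (T i') (q i') := fun i hi =>
    calc α * infSpread S (q i)
        ≤ α * infSpread S (qHi i) := mul_le_mul_of_nonneg_left (round_up i hi) hα
      _ ≤ infSpread (Sbar i) (qHi i) := hgreedy i hi
      _ ≤ μ * infSpread (T i) (qLo i) := hgap i hi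
      _ ≤ μ * infSpread (T i') (q i') :=
        mul_le_mul_of_nonneg_left ((hmax i hi).trans round_down) hμ
  calc α * infSpread S p
      ≤ α * (c * ∑ i ∈ D, infSpread S (q i)) := mul_le_mul_of_nonneg_left hsub hα
    _ = c * ∑ i ∈ D, α * infSpread S (q i) := by rw [← Finset.mul_sum, mul_left_comm]
    _ ≤ c * (D.card • (μ * infSpread (T i') (q i'))) :=
      mul_le_mul_of_nonneg_left (Finset.sum_le_card_nsmul D _ _ topic_bound) hc
    _ = c * D.card * μ * infSpread (T i') (q i') := by rw [nsmul_eq_mul]; ring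

end InfluenceSpread

/-- Theorem 3.1: approximation guarantee of the Best Topic Selection algorithm. -/
theorem BTS_approximation {V : Type*} [Fintype V] [DecidableEq V] {d : ℕ}
    (pt : Fin d → V → V → ℝ)
    (hpt1 : ∀ i u v, 0 ≤ pt i u v ∧ pt i u v ≤ 1) (hpt2 : ∀ i v, pt i v v = 0)
    (lam : Fin d → ℝ) (hlam : ∀ i, 0 ≤ lam i ∧ lam i ≤ 1) (hsum : ∑ i, lam i = 1)
    (Dplus : Finset (Fin d)) (hD : Dplus = Finset.univ.filter (fun i => 0 < lam i))
    (p : V → V → ℝ) (hpdef : ∀ u w, p u w = ∑ j, lam j * pt j u w)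
    (k : ℕ) (c μ : ℝ) (hc : 0 < c) (hμ : 0 < μ)
    (lamLo lamHi : Fin d → ℝ) (T Sbar : Fin d → Finset V)
    (hlo : ∀ i ∈ Dplus,
      0 ≤ lamLo i ∧ lamLo i ≤ lam i ∧ lam i ≤ lamHi i ∧ lamHi i ≤ 1)
    (hgreedy : ∀ i ∈ Dplus, ∀ U : Finset V, U.card ≤ k →
      (1 - Real.exp (-1)) * infSpread U (fun u w => lamHi i * pt i u w) ≤
        infSpread (Sbar i) (fun u w => lamHi i * pt i u w))
    (hgap : ∀ i ∈ Dplus,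
      infSpread (Sbar i) (fun u w => lamHi i * pt i u w) ≤
        μ * infSpread (T i) (fun u w => lamLo i * pt i u w))
    (hsub : ∀ U : Finset V, U.card ≤ k →
      infSpread U p ≤ c * ∑ i ∈ Dplus, infSpread U (fun u w => lam i * pt i u w))
    (i' : Fin d) (hi' : i' ∈ Dplus)
    (hmax : ∀ i ∈ Dplus,
      infSpread (T i) (fun u w => lamLo i * pt i u w) ≤
        infSpread (T i') (fun u w => lamLo i' * pt i' u w)) :
    ∀ S : Finset V, S.card ≤ k →
      (1 - Real.exp (-1)) * infSpread S p ≤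
        c * Dplus.card * μ * infSpread (T i') (fun u w => lam i' * pt i' u w) :=
  fun S hS => BTS_approximation_general Dplus p (fun i u w => lamLo i * pt i u w)
    (fun i u w => lam i * pt i u w) (fun i u w => lamHi i * pt i u w)
    (fun i hi u w => mul_nonneg (hlo i hi).1 (hpt1 i u w).1)
    (fun i hi u w => mul_le_mul_of_nonneg_right (hlo i hi).2.1 (hpt1 i u w).1)
    (fun i hi u w => mul_le_mul_of_nonneg_right (hlo i hi).2.2.1 (hpt1 i u w).1)
    (fun i hi u w => mul_le_one₀ (hlo i hi).2.2.2 (hpt1 i u w).1 (hpt1 i u w).2)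
    (sub_nonneg.2 (Real.exp_le_one_iff.2 (neg_nonpos.2 zero_le_one))) hc.le hμ.le S T Sbar
    (fun i hi => hgreedy i hi S hS) hgap (hsub S hS) hi' hmax
end
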